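/- Let A be a finite-dimensional real affine space over V with dim V = n, let g be a symmetric bilinear form on V, and let (R_0, …, R_n) be an affine basis of A. Set D_{ij} = g(R_j − R_i, R_j − R_i) for 0 ≤ i, j ≤ n. Then g is nondegenerate if and only if the (n+2)×(n+2) symmetric matrix obtained by bordering D with a row of ones, a column of ones, and a zero in the corner (i.e. the Cayley–Menger matrix M with M_{ij} = D_{ij} for i, j ≤ n, M_{i,n+1} = M_{n+1,i} = 1 for i ≤ n, and M_{n+1,n+1} = 0) is invertible. -/

import Mathlib

/-!
Put `u i = R_i - R_0`, so that `D i j = g(u i, u i) + g(u j, u j) - 2 g(u i, u j)`. For a vector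
`(x, t)` with `∑ x = 0`, write `v = ∑ x j • u j` and `s = ∑ x j * g(u j, u j)`. Row `i` of the
Cayley–Menger matrix applied to `(x, t)` is then `s + t - 2 g(u i, v)`, and the last row is `∑ x`.
As `u 0 = 0`, the vector `(x, t)` lies in the kernel iff `∑ x = 0`, `t = -s` and `g(u i, v) = 0` for
all `i`; since the `u i` span `V`, the last condition says that `v` is in the radical of `g`.
The basis property makes `x ↦ v` a bijection from `{x | ∑ x = 0}` onto `V`
(`eq_zero_of_sum_smul`, `exists_sum_smul`), so the kernel of the matrix vanishes iff the radical
of `g` does.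
-/

section

variable {V A : Type*} [AddCommGroup V] [Module ℝ V] [AddTorsor V A] {n : ℕ}
  (b : AffineBasis (Fin (n + 1)) ℝ A)

theorem eq_zero_of_sum_smul (x : Fin (n + 1) → ℝ) (hx : ∑ j, x j = 0)
    (h : ∑ j, x j • (b j -ᵥ b 0) = 0) : x = 0 := by
  have hi := (affineIndependent_iff_of_fintype ℝ b).1 b.ind x hx
  rw [Finset.weightedVSub_eq_weightedVSubOfPoint_of_sum_eq_zero _ _ _ hx (b 0),
    Finset.weightedVSubOfPoint_apply] at hi
  exact funext (hi h)

theorem exists_sum_smul (v : V) :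
    ∃ x : Fin (n + 1) → ℝ, ∑ j, x j = 0 ∧ ∑ j, x j • (b j -ᵥ b 0) = v := by
  -- The difference of the barycentric coordinates of `v +ᵥ b 0` and `b 0`.
  let x : Fin (n + 1) → ℝ := (fun j => b.coord j (v +ᵥ b 0)) - fun j => b.coord j (b 0)
  have hx : ∑ j, x j = 0 := by
    simp only [x, Pi.sub_apply, Finset.sum_sub_distrib, b.sum_coord_apply_eq_one, sub_self]
  refine ⟨x, hx, ?_⟩
  rw [← Finset.weightedVSubOfPoint_apply,
    ← Finset.weightedVSub_eq_weightedVSubOfPoint_of_sum_eq_zero _ _ _ hx (b 0)]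
  simp only [x]
  rw [← Finset.affineCombination_vsub, b.affineCombination_coord_eq_self,
    b.affineCombination_coord_eq_self, vadd_vsub]

/-- The top rows of the Cayley–Menger matrix applied to a vector whose first `n + 1` entries `x`
sum to zero, up to the contribution of the last entry. -/
theorem sum_sqDist_mul (g : LinearMap.BilinForm ℝ V) (hg : ∀ x y, g x y = g y x)
    (x : Fin (n + 1) → ℝ) (hx : ∑ j, x j = 0) (i : Fin (n + 1)) :
    ∑ j, g (b j -ᵥ b i) (b j -ᵥ b i) * x j =
      ∑ j, x j * g (b j -ᵥ b 0) (b j -ᵥ b 0)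
        - 2 * g (∑ j, x j • (b j -ᵥ b 0)) (b i -ᵥ b 0) := by
  have h1 : ∀ j, g (b j -ᵥ b i) (b j -ᵥ b i) * x j =
      g (b i -ᵥ b 0) (b i -ᵥ b 0) * x j + (x j * g (b j -ᵥ b 0) (b j -ᵥ b 0)
        - 2 * (x j * g (b j -ᵥ b 0) (b i -ᵥ b 0))) := by
    intro j
    rw [← vsub_sub_vsub_cancel_right (b j) (b i) (b 0)]
    simp only [map_sub, LinearMap.sub_apply]
    rw [hg (b i -ᵥ b 0) (b j -ᵥ b 0)]
    ring
  simp only [h1, Finset.sum_add_distrib, Finset.sum_sub_distrib, ← Finset.mul_sum, hx, map_sum,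
    LinearMap.sum_apply, map_smul, LinearMap.smul_apply, smul_eq_mul, mul_zero, zero_add]

end

/-- Let `(R_0, …, R_n)` be an affine basis of an `n`-dimensional real
affine space `A` and `g` a symmetric bilinear form on `V`.  With
`D i j = g(R_j − R_i, R_j − R_i)`, the form `g` is nondegenerate iff the bordered
`(n+2)×(n+2)` Cayley–Menger matrix (with `D` in the corner, a row and column of ones,
and `0` in the last diagonal entry) is invertible. -/
theorem stmt8 {V A : Type*} [AddCommGroup V] [Module ℝ V] [AddTorsor V A]
    [FiniteDimensional ℝ V] {n : ℕ} (hn : Module.finrank ℝ V = n)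
    (b : AffineBasis (Fin (n + 1)) ℝ A)
    (g : LinearMap.BilinForm ℝ V) (hg : ∀ x y, g x y = g y x) :
    (∀ v : V, (∀ x : V, g v x = 0) → v = 0) ↔
      IsUnit (Matrix.of fun i j : Fin (n + 2) =>
        if hi : (i : ℕ) < n + 1 then
          if hj : (j : ℕ) < n + 1 then
            g (b ⟨(j : ℕ), hj⟩ -ᵥ b ⟨(i : ℕ), hi⟩)
              (b ⟨(j : ℕ), hj⟩ -ᵥ b ⟨(i : ℕ), hi⟩)
          else (1 : ℝ)
        else if (j : ℕ) < n + 1 then (1 : ℝ) else (0 : ℝ)) := by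
  rw [← Matrix.mulVec_injective_iff_isUnit]
  set M := (Matrix.of fun i j : Fin (n + 2) =>
        if hi : (i : ℕ) < n + 1 then
          if hj : (j : ℕ) < n + 1 then
            g (b ⟨(j : ℕ), hj⟩ -ᵥ b ⟨(i : ℕ), hi⟩)
              (b ⟨(j : ℕ), hj⟩ -ᵥ b ⟨(i : ℕ), hi⟩)
          else (1 : ℝ)
        else if (j : ℕ) < n + 1 then (1 : ℝ) else (0 : ℝ)) with hM
  have hle : ∀ i : Fin (n + 1), (i : ℕ) ≤ n := fun i => Fin.is_le i
  have htop : ∀ (y : Fin (n + 2) → ℝ) (i : Fin (n + 1)), M.mulVec y i.castSucc =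
      ∑ j, g (b j -ᵥ b i) (b j -ᵥ b i) * y (Fin.castSucc j) + y (Fin.last _) := by
    intro y i
    simp [hM, Matrix.mulVec, dotProduct, Fin.sum_univ_castSucc (n := n + 1), hle]
  have hlast : ∀ y : Fin (n + 2) → ℝ, M.mulVec y (Fin.last _) =
      ∑ j : Fin (n + 1), y (Fin.castSucc j) := by
    intro y
    simp [hM, Matrix.mulVec, dotProduct, Fin.sum_univ_castSucc (n := n + 1), hle]
  have hker : Function.Injective M.mulVec ↔ ∀ y, M.mulVec y = 0 → y = 0 :=
    injective_iff_map_eq_zero M.mulVecLin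
  rw [hker]
  constructor
  · intro hnd y hy
    have hx : ∑ j : Fin (n + 1), y (Fin.castSucc j) = 0 := by rw [← hlast, hy]; rfl
    have hrow : ∀ i, ∑ j : Fin (n + 1), y (Fin.castSucc j) * g (b j -ᵥ b 0) (b j -ᵥ b 0)
        - 2 * g (∑ j : Fin (n + 1), y (Fin.castSucc j) • (b j -ᵥ b 0)) (b i -ᵥ b 0)
        + y (Fin.last _) = 0 := by
      intro i
      rw [← sum_sqDist_mul b g hg (fun j => y (Fin.castSucc j)) hx i, ← htop, hy]
      rfl
    -- Row `0` determines the last entry, because `b 0 -ᵥ b 0 = 0`.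
    have h0 := hrow 0
    rw [vsub_self, LinearMap.map_zero] at h0
    have hv : ∑ j : Fin (n + 1), y (Fin.castSucc j) • (b j -ᵥ b 0) = 0 := by
      apply hnd
      intro w
      obtain ⟨z, -, rfl⟩ := exists_sum_smul b w
      rw [map_sum]
      refine Finset.sum_eq_zero fun i _ => ?_
      have hi := hrow i
      rw [map_smul, smul_eq_mul]
      have : g (∑ j : Fin (n + 1), y (Fin.castSucc j) • (b j -ᵥ b 0)) (b i -ᵥ b 0) = 0 := by
        linarith
      rw [this, mul_zero]
    have hx0 := congrFun (eq_zero_of_sum_smul b (fun j => y (Fin.castSucc j)) hx hv)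
    simp only [Pi.zero_apply] at hx0
    funext k
    refine Fin.lastCases ?_ (fun j => ?_) k
    · simpa [hx0] using h0
    · exact hx0 j
  · intro hinj v hv
    obtain ⟨x, hx, hxv⟩ := exists_sum_smul b v
    have hy := hinj (Fin.snoc (α := fun _ => ℝ) x
      (-∑ j, x j * g (b j -ᵥ b 0) (b j -ᵥ b 0))) (by
        funext k
        refine Fin.lastCases ?_ (fun i => ?_) k
        · rw [hlast]
          simpa using hx
        · rw [htop]
          simp only [Fin.snoc_castSucc, Fin.snoc_last]
          rw [sum_sqDist_mul b g hg x hx i, hxv, hv]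
          simp)
    rw [← hxv]
    refine Finset.sum_eq_zero fun j _ => ?_
    have hj := congrFun hy j.castSucc
    rw [Fin.snoc_castSucc] at hj
    rw [hj, Pi.zero_apply, zero_smul]
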